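/- arXiv:1606.03562 — 2 statements merged into one kernel-verified Lean document; each statement's English description precedes it below -/
import Mathlib

section
/- Soundness of the analytic tableaux: if a JL-formula A has a JL^e_CS-tableau proof (a closed JL^e_CS-tableau beginning with ¬A), then A is JL_CS-valid. -/
namespace JLTab

/-- Justification terms: variables, constants, application, sum,
verifier `!`, negative verifier `?`, weak negative verifier `?̄`. -/
inductive Term : Type
  | var : ℕ → Term
  | const : ℕ → Term
  | app : Term → Term → Term
  | sum : Term → Term → Term
  | bang : Term → Term
  | quest : Term → Term
  | qbar : Term → Term
  deriving DecidableEq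

/-- JL-formulas: `A ::= p | ⊥ | ¬A | A → A | t:A`. -/
inductive Fml : Type
  | prop : ℕ → Fml
  | bot : Fml
  | neg : Fml → Fml
  | imp : Fml → Fml → Fml
  | box : Term → Fml → Fml
  deriving DecidableEq

/-- A justification logic JL is J extended by any combination of jT, jD, j4, jB, j5. -/
structure Logic where
  hasT : Bool
  hasD : Bool
  has4 : Bool
  hasB : Bool
  has5 : Bool

/-- The basic justification logic J. -/
def Logic.J : Logic := ⟨false, false, false, false, false⟩

/-- The logic of proofs LP = JT4. -/
def Logic.LP : Logic := ⟨true, false, true, false, false⟩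

/-- The logic JT45. -/
def Logic.JT45 : Logic := ⟨true, false, true, false, true⟩

/-- Propositional evaluation of a formula, treating propositional variables and
formulas `t:A` as atoms. -/
def evalProp (v : Fml → Bool) : Fml → Bool
  | .prop n => v (.prop n)
  | .bot => false
  | .neg A => !(evalProp v A)
  | .imp A B => !(evalProp v A) || evalProp v B
  | .box t A => v (.box t A)

/-- A propositional tautology. -/
def IsTaut (A : Fml) : Prop := ∀ v : Fml → Bool, evalProp v A = true

/-- Axiom instances of the justification logic `L`. -/
inductive Axm (L : Logic) : Fml → Prop
  | taut {A} : IsTaut A → Axm L A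
  | sumL {s t A} : Axm L (.imp (.box s A) (.box (.sum s t) A))
  | sumR {s t A} : Axm L (.imp (.box s A) (.box (.sum t s) A))
  | jK {s t A B} :
      Axm L (.imp (.box s (.imp A B)) (.imp (.box t A) (.box (.app s t) B)))
  | jT {t A} : L.hasT = true → Axm L (.imp (.box t A) A)
  | jD {t} : L.hasD = true → Axm L (.imp (.box t .bot) .bot)
  | j4 {t A} : L.has4 = true → Axm L (.imp (.box t A) (.box (.bang t) (.box t A)))
  | jB {t A} : L.hasB = true →
      Axm L (.imp (.neg A) (.box (.qbar t) (.neg (.box t A))))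
  | j5 {t A} : L.has5 = true →
      Axm L (.imp (.neg (.box t A)) (.box (.quest t) (.neg (.box t A))))

/-- Formulas of the form `c_{i_n} : ⋯ : c_{i_1} : A` (n ≥ 1) with `A` an axiom
instance of `L`; exactly the formulas produced by Iterated Axiom Necessitation. -/
inductive IsIAN (L : Logic) : Fml → Prop
  | base {c A} : Axm L A → IsIAN L (.box (.const c) A)
  | step {c F} : IsIAN L F → IsIAN L (.box (.const c) F)

/-- A constant specification for `L`: a downward closed set of formulas of the
form `c_{i_n} : ⋯ : c_{i_1} : A` with `A` an axiom instance of `L`. -/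
structure ConstSpec (L : Logic) where
  set : Set Fml
  mem_ian : ∀ F ∈ set, IsIAN L F
  downward : ∀ c F, Fml.box (Term.const c) F ∈ set → IsIAN L F → F ∈ set

/-- The Hilbert system JL_CS: axioms of `L`, Modus Ponens, and Iterated Axiom
Necessitation restricted to the constant specification `cs`. -/
inductive Deriv (L : Logic) (cs : ConstSpec L) : Fml → Prop
  | axm {A} : Axm L A → Deriv L cs A
  | mp {A B} : Deriv L cs (.imp A B) → Deriv L cs A → Deriv L cs B
  | ian {F} : F ∈ cs.set → Deriv L cs F

/-- An M-model (Mkrtychev model): an admissible evidence function together with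
a valuation of propositional variables. -/
structure MModel where
  ev : Term → Set Fml
  val : ℕ → Prop

/-- Truth in an M-model; `t:A` is true iff `A ∈ E(t)`. -/
def MModel.sat (M : MModel) : Fml → Prop
  | .prop n => M.val n
  | .bot => False
  | .neg A => ¬ M.sat A
  | .imp A B => M.sat A → M.sat B
  | .box t A => A ∈ M.ev t

/-- `M` is an M-model for JL_CS: conditions E1–E3 always, and E4–E8 according to
the extra axioms of the logic `L`. -/
structure IsModel (L : Logic) (cs : ConstSpec L) (M : MModel) : Prop where
  e1 : ∀ s t A B, Fml.imp A B ∈ M.ev s → A ∈ M.ev t → B ∈ M.ev (.app s t)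
  e2l : ∀ s t, M.ev s ⊆ M.ev (.sum s t)
  e2r : ∀ s t, M.ev t ⊆ M.ev (.sum s t)
  e3 : ∀ c F, Fml.box (.const c) F ∈ cs.set → F ∈ M.ev (.const c)
  e4 : L.hasT = true → ∀ t A, A ∈ M.ev t → M.sat A
  e5 : L.hasD = true → ∀ t, Fml.bot ∉ M.ev t
  e6 : L.has4 = true → ∀ t A, A ∈ M.ev t → Fml.box t A ∈ M.ev (.bang t)
  e7 : L.hasB = true → ∀ t A, ¬ M.sat A → Fml.neg (.box t A) ∈ M.ev (.qbar t)
  e8 : L.has5 = true → ∀ t A, A ∉ M.ev t → Fml.neg (.box t A) ∈ M.ev (.quest t)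

/-- `A` is JL_CS-valid: true in every M-model of JL_CS. -/
def Valid (L : Logic) (cs : ConstSpec L) (A : Fml) : Prop :=
  ∀ M : MModel, IsModel L cs M → M.sat A

/-- `Subf A B`: `A` is a subformula of `B`. -/
inductive Subf : Fml → Fml → Prop
  | refl (A) : Subf A A
  | neg {A B} : Subf A B → Subf A (.neg B)
  | impL {A B C} : Subf A B → Subf A (.imp B C)
  | impR {A C B} : Subf A C → Subf A (.imp B C)
  | box {A B t} : Subf A B → Subf A (.box t B)

/-- `A` is a CS-subformula of the root set `R`: a subformula of a formula in
`R ∪ CS`. -/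
def CSSub {L : Logic} (cs : ConstSpec L) (R : Set Fml) (A : Fml) : Prop :=
  (∃ B ∈ R, Subf A B) ∨ (∃ F ∈ cs.set, Subf A F)

/-- `A` is a weak CS-subformula of the root set `R`: a subformula, or the
negation of a subformula, of a formula in `R ∪ CS`. -/
def WeakCSSub {L : Logic} (cs : ConstSpec L) (R : Set Fml) (A : Fml) : Prop :=
  CSSub cs R A ∨ ∃ C, A = Fml.neg C ∧ CSSub cs R C

/-- `SubTm u t`: `u` is a subterm of `t`. -/
inductive SubTm : Term → Term → Prop
  | refl (t) : SubTm t t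
  | appL {u s t} : SubTm u s → SubTm u (.app s t)
  | appR {u s t} : SubTm u t → SubTm u (.app s t)
  | sumL {u s t} : SubTm u s → SubTm u (.sum s t)
  | sumR {u s t} : SubTm u t → SubTm u (.sum s t)
  | bang {u t} : SubTm u t → SubTm u (.bang t)
  | quest {u t} : SubTm u t → SubTm u (.quest t)
  | qbar {u t} : SubTm u t → SubTm u (.qbar t)

/-- `OccT u A`: the term `u` occurs in the formula `A`. -/
inductive OccT (u : Term) : Fml → Prop
  | neg {A} : OccT u A → OccT u (.neg A)
  | impL {A B} : OccT u A → OccT u (.imp A B)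
  | impR {A B} : OccT u B → OccT u (.imp A B)
  | boxT {t A} : SubTm u t → OccT u (.box t A)
  | boxF {t A} : OccT u A → OccT u (.box t A)

/-- The term `u` occurs in (some formula of) the root set `R`. -/
def OccRoot (R : Set Fml) (u : Term) : Prop := ∃ B ∈ R, OccT u B

/-- Nodes of a tableau: JL-formulas `A`, and evidential formulas
`[t,A]` (`pos`) and `∼[t,A]` (`neg`). -/
inductive Node : Type
  | fml : Fml → Node
  | pos : Term → Fml → Node
  | neg : Term → Fml → Node
  deriving DecidableEq

/-- `TabN L cs pb cut R Γ n`: the branch `Γ` of a tableau with root set `R` has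
a closed tableau continuation using `n` rule applications.  The flag `pb`
enables the analytic rules (PB), (PB_e); the flag `cut` enables the
unrestricted cut rules (cut_f), (cut_e).  The rules (e), (e_⊥), (!), (?̄), (?)
are enabled according to the extra axioms of the logic `L`.  Base cases are the
four branch-closure conditions. -/
inductive TabN (L : Logic) (cs : ConstSpec L) (pb cut : Bool) (R : Set Fml) :
    Set Node → ℕ → Prop
  | closeF {Γ A} : Node.fml A ∈ Γ → Node.fml (.neg A) ∈ Γ → TabN L cs pb cut R Γ 0
  | closeE {Γ t A} : Node.pos t A ∈ Γ → Node.neg t A ∈ Γ → TabN L cs pb cut R Γ 0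
  | closeBot {Γ} : Node.fml .bot ∈ Γ → TabN L cs pb cut R Γ 0
  | closeCS {Γ c F} : Fml.box (.const c) F ∈ cs.set →
      Node.fml (.neg (.box (.const c) F)) ∈ Γ → TabN L cs pb cut R Γ 0
  | fNeg {Γ A n} : Node.fml (.neg (.neg A)) ∈ Γ →
      TabN L cs pb cut R (insert (Node.fml A) Γ) n → TabN L cs pb cut R Γ (n + 1)
  | fImp {Γ A B n} : Node.fml (.neg (.imp A B)) ∈ Γ →
      TabN L cs pb cut R (insert (Node.fml A) (insert (Node.fml (.neg B)) Γ)) n →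
      TabN L cs pb cut R Γ (n + 1)
  | tImp {Γ A B m n} : Node.fml (.imp A B) ∈ Γ →
      TabN L cs pb cut R (insert (Node.fml (.neg A)) Γ) m →
      TabN L cs pb cut R (insert (Node.fml B) Γ) n →
      TabN L cs pb cut R Γ (m + n + 1)
  | te {Γ t A n} : Node.fml (.box t A) ∈ Γ →
      TabN L cs pb cut R (insert (Node.pos t A) Γ) n → TabN L cs pb cut R Γ (n + 1)
  | fe {Γ t A n} : Node.fml (.neg (.box t A)) ∈ Γ →
      TabN L cs pb cut R (insert (Node.neg t A) Γ) n → TabN L cs pb cut R Γ (n + 1)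
  | plusL {Γ t s A n} : Node.neg (.sum t s) A ∈ Γ →
      TabN L cs pb cut R (insert (Node.neg t A) Γ) n → TabN L cs pb cut R Γ (n + 1)
  | plusR {Γ t s A n} : Node.neg (.sum t s) A ∈ Γ →
      TabN L cs pb cut R (insert (Node.neg s A) Γ) n → TabN L cs pb cut R Γ (n + 1)
  | appR {Γ s t A B n} : Node.pos s (.imp A B) ∈ Γ → Node.pos t A ∈ Γ →
      CSSub cs R (.imp A B) → OccRoot R (.app s t) →
      TabN L cs pb cut R (insert (Node.pos (.app s t) B) Γ) n →
      TabN L cs pb cut R Γ (n + 1)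
  | rulePB {Γ A m n} : pb = true → CSSub cs R A →
      TabN L cs pb cut R (insert (Node.fml A) Γ) m →
      TabN L cs pb cut R (insert (Node.fml (.neg A)) Γ) n →
      TabN L cs pb cut R Γ (m + n + 1)
  | rulePBe {Γ t A m n} : pb = true → CSSub cs R A → OccRoot R t →
      TabN L cs pb cut R (insert (Node.pos t A) Γ) m →
      TabN L cs pb cut R (insert (Node.neg t A) Γ) n →
      TabN L cs pb cut R Γ (m + n + 1)
  | cutF {Γ A m n} : cut = true →
      TabN L cs pb cut R (insert (Node.fml A) Γ) m →
      TabN L cs pb cut R (insert (Node.fml (.neg A)) Γ) n →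
      TabN L cs pb cut R Γ (m + n + 1)
  | cutE {Γ t A m n} : cut = true →
      TabN L cs pb cut R (insert (Node.pos t A) Γ) m →
      TabN L cs pb cut R (insert (Node.neg t A) Γ) n →
      TabN L cs pb cut R Γ (m + n + 1)
  | ruleT {Γ t A n} : L.hasT = true → Node.pos t A ∈ Γ →
      TabN L cs pb cut R (insert (Node.fml A) Γ) n → TabN L cs pb cut R Γ (n + 1)
  | ruleD {Γ t n} : L.hasD = true → Node.pos t .bot ∈ Γ →
      TabN L cs pb cut R (insert (Node.fml .bot) Γ) n → TabN L cs pb cut R Γ (n + 1)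
  | rule4 {Γ t A n} : L.has4 = true → Node.neg (.bang t) (.box t A) ∈ Γ →
      TabN L cs pb cut R (insert (Node.neg t A) Γ) n → TabN L cs pb cut R Γ (n + 1)
  | ruleB {Γ t A n} : L.hasB = true → Node.neg (.qbar t) (.neg (.box t A)) ∈ Γ →
      TabN L cs pb cut R (insert (Node.fml A) Γ) n → TabN L cs pb cut R Γ (n + 1)
  | rule5 {Γ t A n} : L.has5 = true → Node.neg (.quest t) (.neg (.box t A)) ∈ Γ →
      TabN L cs pb cut R (insert (Node.pos t A) Γ) n → TabN L cs pb cut R Γ (n + 1)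

/-- There is a closed tableau below the branch `Γ` (root set `R`). -/
def Tab (L : Logic) (cs : ConstSpec L) (pb cut : Bool) (R : Set Fml)
    (Γ : Set Node) : Prop :=
  ∃ n, TabN L cs pb cut R Γ n

/-- A tableau proof of `A`: a closed tableau whose root is `¬A`. -/
def TabProof (L : Logic) (cs : ConstSpec L) (pb cut : Bool) (A : Fml) : Prop :=
  Tab L cs pb cut {Fml.neg A} {Node.fml (Fml.neg A)}

/-- A single application of a JL^e_CS-tableau rule to the branch `Γ` (root set
`R`), producing the list of extended branches (one for a non-branching rule,
two for a branching rule). -/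
inductive RuleApp (L : Logic) (cs : ConstSpec L) (R : Set Fml) (Γ : Set Node) :
    List (Set Node) → Prop
  | fNeg {A} : Node.fml (.neg (.neg A)) ∈ Γ →
      RuleApp L cs R Γ [insert (Node.fml A) Γ]
  | fImp {A B} : Node.fml (.neg (.imp A B)) ∈ Γ →
      RuleApp L cs R Γ [insert (Node.fml A) (insert (Node.fml (.neg B)) Γ)]
  | tImp {A B} : Node.fml (.imp A B) ∈ Γ →
      RuleApp L cs R Γ [insert (Node.fml (.neg A)) Γ, insert (Node.fml B) Γ]
  | te {t A} : Node.fml (.box t A) ∈ Γ → RuleApp L cs R Γ [insert (Node.pos t A) Γ]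
  | fe {t A} : Node.fml (.neg (.box t A)) ∈ Γ →
      RuleApp L cs R Γ [insert (Node.neg t A) Γ]
  | plusL {t s A} : Node.neg (.sum t s) A ∈ Γ →
      RuleApp L cs R Γ [insert (Node.neg t A) Γ]
  | plusR {t s A} : Node.neg (.sum t s) A ∈ Γ →
      RuleApp L cs R Γ [insert (Node.neg s A) Γ]
  | appR {s t A B} : Node.pos s (.imp A B) ∈ Γ → Node.pos t A ∈ Γ →
      CSSub cs R (.imp A B) → OccRoot R (.app s t) →
      RuleApp L cs R Γ [insert (Node.pos (.app s t) B) Γ]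
  | rulePB {A} : CSSub cs R A →
      RuleApp L cs R Γ [insert (Node.fml A) Γ, insert (Node.fml (.neg A)) Γ]
  | rulePBe {t A} : CSSub cs R A → OccRoot R t →
      RuleApp L cs R Γ [insert (Node.pos t A) Γ, insert (Node.neg t A) Γ]
  | ruleT {t A} : L.hasT = true → Node.pos t A ∈ Γ →
      RuleApp L cs R Γ [insert (Node.fml A) Γ]
  | ruleD {t} : L.hasD = true → Node.pos t .bot ∈ Γ →
      RuleApp L cs R Γ [insert (Node.fml .bot) Γ]
  | rule4 {t A} : L.has4 = true → Node.neg (.bang t) (.box t A) ∈ Γ →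
      RuleApp L cs R Γ [insert (Node.neg t A) Γ]
  | ruleB {t A} : L.hasB = true → Node.neg (.qbar t) (.neg (.box t A)) ∈ Γ →
      RuleApp L cs R Γ [insert (Node.fml A) Γ]
  | rule5 {t A} : L.has5 = true → Node.neg (.quest t) (.neg (.box t A)) ∈ Γ →
      RuleApp L cs R Γ [insert (Node.pos t A) Γ]

/-- Satisfaction of tableau nodes in an M-model: `M` satisfies `[t,A]` iff
`A ∈ E(t)`, and satisfies `∼[t,A]` iff `A ∉ E(t)`. -/
def NodeSat (M : MModel) : Node → Prop
  | .fml A => M.sat A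
  | .pos t A => A ∈ M.ev t
  | .neg t A => A ∉ M.ev t

/-- Branches reachable from the initial branch by tableau rule applications. -/
inductive Reach (L : Logic) (cs : ConstSpec L) (R : Set Fml) :
    Set Node → Set Node → Prop
  | refl (Γ) : Reach L cs R Γ Γ
  | step {Γ Γ' Γ'' exts} : Reach L cs R Γ Γ' → RuleApp L cs R Γ' exts →
      Γ'' ∈ exts → Reach L cs R Γ Γ''

/-- One non-redundant tableau construction step: a rule application properly
extending the branch. -/
def Step (L : Logic) (cs : ConstSpec L) (R : Set Fml) (Γ Γ' : Set Node) : Prop :=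
  ∃ exts, RuleApp L cs R Γ exts ∧ Γ' ∈ exts ∧ Γ ⊂ Γ'

/-- The term is in the language of the logic `L` (which contains those
operations occurring in the axioms of `L`). -/
def TermInLang (L : Logic) : Term → Prop
  | .var _ => True
  | .const _ => True
  | .app s t => TermInLang L s ∧ TermInLang L t
  | .sum s t => TermInLang L s ∧ TermInLang L t
  | .bang t => L.has4 = true ∧ TermInLang L t
  | .quest t => L.has5 = true ∧ TermInLang L t
  | .qbar t => L.hasB = true ∧ TermInLang L t

/-- The formula is in the language of the logic `L`. -/
def FmlInLang (L : Logic) : Fml → Prop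
  | .prop _ => True
  | .bot => True
  | .neg A => FmlInLang L A
  | .imp A B => FmlInLang L A ∧ FmlInLang L B
  | .box t A => TermInLang L t ∧ FmlInLang L A

/-- The initial branch of a tableau for a finite set `S` of formulas. -/
def branchOf (S : Finset Fml) : Set Node := Node.fml '' (↑S : Set Fml)

end JLTab

/-! If an M-model satisfies a branch, then whichever rule is applied, cuts included, the model still
satisfies one of the resulting branches. Starting from a satisfied root this would produce a
satisfied branch in any closed tableau, but each closure condition is unsatisfiable. So the root
`¬A` of a closed tableau fails in every model. -/

namespace JLTab

section NodeSat

variable {M : MModel} {t : Term} {A B : Fml}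

theorem nodeSat_pos_iff_fml_box : NodeSat M (.pos t A) ↔ NodeSat M (.fml (.box t A)) :=
  Iff.rfl

theorem nodeSat_neg_iff_fml_neg_box : NodeSat M (.neg t A) ↔ NodeSat M (.fml (.neg (.box t A))) :=
  Iff.rfl

theorem nodeSat_fml_or_fml_neg (M : MModel) (A : Fml) :
    NodeSat M (.fml A) ∨ NodeSat M (.fml (.neg A)) :=
  em (M.sat A)

theorem nodeSat_pos_or_neg (M : MModel) (t : Term) (A : Fml) :
    NodeSat M (.pos t A) ∨ NodeSat M (.neg t A) :=
  em (A ∈ M.ev t)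

theorem nodeSat_fml_of_neg_neg (h : NodeSat M (.fml (.neg (.neg A)))) : NodeSat M (.fml A) :=
  not_not.1 h

theorem nodeSat_fml_and_fml_neg_of_neg_imp (h : NodeSat M (.fml (.neg (.imp A B)))) :
    NodeSat M (.fml A) ∧ NodeSat M (.fml (.neg B)) :=
  Classical.not_imp.1 h

theorem nodeSat_fml_neg_or_fml_of_imp (h : NodeSat M (.fml (.imp A B))) :
    NodeSat M (.fml (.neg A)) ∨ NodeSat M (.fml B) :=
  not_or_of_imp h

end NodeSat

namespace IsModel

variable {L : Logic} {cs : ConstSpec L} {M : MModel} {s t : Term} {A B : Fml}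

theorem nodeSat_neg_of_neg_sum_left (hM : IsModel L cs M) (h : NodeSat M (.neg (.sum s t) A)) :
    NodeSat M (.neg s A) :=
  Set.notMem_subset (hM.e2l s t) h

theorem nodeSat_neg_of_neg_sum_right (hM : IsModel L cs M) (h : NodeSat M (.neg (.sum s t) A)) :
    NodeSat M (.neg t A) :=
  Set.notMem_subset (hM.e2r s t) h

theorem nodeSat_pos_app (hM : IsModel L cs M) (hs : NodeSat M (.pos s (.imp A B)))
    (ht : NodeSat M (.pos t A)) : NodeSat M (.pos (.app s t) B) :=
  hM.e1 s t A B hs ht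

theorem nodeSat_fml_of_pos (hM : IsModel L cs M) (hT : L.hasT = true)
    (h : NodeSat M (.pos t A)) : NodeSat M (.fml A) :=
  hM.e4 hT t A h

theorem nodeSat_neg_of_neg_bang (hM : IsModel L cs M) (h4 : L.has4 = true)
    (h : NodeSat M (.neg (.bang t) (.box t A))) : NodeSat M (.neg t A) :=
  mt (hM.e6 h4 t A) h

theorem nodeSat_fml_of_neg_qbar (hM : IsModel L cs M) (hB : L.hasB = true)
    (h : NodeSat M (.neg (.qbar t) (.neg (.box t A)))) : NodeSat M (.fml A) :=
  not_imp_comm.1 (hM.e7 hB t A) h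

theorem nodeSat_pos_of_neg_quest (hM : IsModel L cs M) (h5 : L.has5 = true)
    (h : NodeSat M (.neg (.quest t) (.neg (.box t A)))) : NodeSat M (.pos t A) :=
  not_imp_comm.1 (hM.e8 h5 t A) h

end IsModel

/-- Satisfaction of a branch in an M-model: every node on it is satisfied. This is the invariant
carried down a tableau. -/
def BranchSat (M : MModel) (Γ : Set Node) : Prop :=
  ∀ ⦃x⦄, x ∈ Γ → NodeSat M x

section BranchSat

variable {M : MModel} {Γ : Set Node} {x y : Node}

theorem branchSat_singleton : BranchSat M {x} ↔ NodeSat M x :=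
  forall_eq

protected theorem BranchSat.insert (hΓ : BranchSat M Γ) (hx : NodeSat M x) :
    BranchSat M (insert x Γ) :=
  Set.forall_mem_insert.2 ⟨hx, hΓ⟩

theorem BranchSat.insert_or_insert (hΓ : BranchSat M Γ) (hxy : NodeSat M x ∨ NodeSat M y) :
    BranchSat M (insert x Γ) ∨ BranchSat M (insert y Γ) :=
  hxy.imp hΓ.insert hΓ.insert

end BranchSat

theorem TabN.not_branchSat {L : Logic} {cs : ConstSpec L} {pb cut : Bool} {R : Set Fml}
    {Γ : Set Node} {n : ℕ} {M : MModel} (h : TabN L cs pb cut R Γ n) (hM : IsModel L cs M) :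
    ¬ BranchSat M Γ := by
  induction h with intro hΓ
  | closeF hA hnA => exact hΓ hnA (hΓ hA)
  | closeE hpos hneg => exact hΓ hneg (hΓ hpos)
  | closeBot hbot => exact hΓ hbot
  | closeCS hcs hneg => exact hΓ hneg (hM.e3 _ _ hcs)
  | fNeg hA _ ih => exact ih (hΓ.insert (nodeSat_fml_of_neg_neg (hΓ hA)))
  | fImp himp _ ih =>
    obtain ⟨hA, hnB⟩ := nodeSat_fml_and_fml_neg_of_neg_imp (hΓ himp)
    exact ih ((hΓ.insert hnB).insert hA)
  | tImp himp _ _ ihA ihB =>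
    exact (hΓ.insert_or_insert (nodeSat_fml_neg_or_fml_of_imp (hΓ himp))).elim ihA ihB
  | te hbox _ ih => exact ih (hΓ.insert (nodeSat_pos_iff_fml_box.2 (hΓ hbox)))
  | fe hbox _ ih => exact ih (hΓ.insert (nodeSat_neg_iff_fml_neg_box.2 (hΓ hbox)))
  | plusL hsum _ ih => exact ih (hΓ.insert (hM.nodeSat_neg_of_neg_sum_left (hΓ hsum)))
  | plusR hsum _ ih => exact ih (hΓ.insert (hM.nodeSat_neg_of_neg_sum_right (hΓ hsum)))
  | appR himp hA _ _ _ ih => exact ih (hΓ.insert (hM.nodeSat_pos_app (hΓ himp) (hΓ hA)))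
  | rulePB _ _ _ _ ihA ihnA | cutF _ _ _ ihA ihnA =>
    exact (hΓ.insert_or_insert (nodeSat_fml_or_fml_neg M _)).elim ihA ihnA
  | rulePBe _ _ _ _ _ ihpos ihneg | cutE _ _ _ ihpos ihneg =>
    exact (hΓ.insert_or_insert (nodeSat_pos_or_neg M _ _)).elim ihpos ihneg
  | ruleT hT hA _ ih => exact ih (hΓ.insert (hM.nodeSat_fml_of_pos hT (hΓ hA)))
  | ruleD hD hbot => exact hM.e5 hD _ (hΓ hbot)
  | rule4 h4 hbang _ ih => exact ih (hΓ.insert (hM.nodeSat_neg_of_neg_bang h4 (hΓ hbang)))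
  | ruleB hB hqbar _ ih => exact ih (hΓ.insert (hM.nodeSat_fml_of_neg_qbar hB (hΓ hqbar)))
  | rule5 h5 hquest _ ih => exact ih (hΓ.insert (hM.nodeSat_pos_of_neg_quest h5 (hΓ hquest)))

theorem tableau_soundness_general {L : Logic} {cs : ConstSpec L} {pb cut : Bool} {A : Fml}
    (h : TabProof L cs pb cut A) : Valid L cs A := by
  intro M hM
  obtain ⟨_, hclosed⟩ := h
  by_contra hA
  exact hclosed.not_branchSat hM (branchSat_singleton.2 hA)

end JLTab

/-- Soundness: if a JL-formula A has a JL^e_CS-tableau proof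
(a closed tableau with root ¬A, PB rules allowed, no unrestricted cut), then A
is JL_CS-valid. -/
theorem JLTab.tableau_soundness (L : Logic) (cs : ConstSpec L) (A : Fml)
    (h : TabProof L cs true false A) : Valid L cs A :=
  tableau_soundness_general h
end

section
/- For any finite constant specification CS for JL, every JL^e_CS-tableau terminates: the construction of a JL^e_CS-tableau for a given root formula involves only finitely many formulas and only finitely many rule applications. -/
/-!
Every rule adds only nodes built from subformulas of root and constant-specification formulas,
possibly negated or paired with a term occurring there. For finite data there are finitely many
such nodes, hence finitely many reachable branches, whereas an infinite sequence of
non-redundant steps would visit infinitely many. A root branch of arbitrary nodes is absorbed by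
enlarging the root set, a node `[t,A]` or `∼[t,A]` contributing the formula `t:A`.
-/

namespace JLTab

theorem Subf.trans {A B C : Fml} (hAB : Subf A B) (hBC : Subf B C) : Subf A C := by
  induction hBC with
  | refl => exact hAB
  | neg _ ih => exact .neg ih
  | impL _ ih => exact .impL ih
  | impR _ ih => exact .impR ih
  | box _ ih => exact .box ih

theorem SubTm.trans {s t u : Term} (hst : SubTm s t) (htu : SubTm t u) : SubTm s u := by
  induction htu with
  | refl => exact hst
  | appL _ ih => exact .appL ih
  | appR _ ih => exact .appR ih
  | sumL _ ih => exact .sumL ih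
  | sumR _ ih => exact .sumR ih
  | bang _ ih => exact .bang ih
  | quest _ ih => exact .quest ih
  | qbar _ ih => exact .qbar ih

theorem OccT.of_subTm {s t : Term} {A : Fml} (ht : OccT t A) (hst : SubTm s t) : OccT s A := by
  induction ht with
  | neg _ ih => exact .neg ih
  | impL _ ih => exact .impL ih
  | impR _ ih => exact .impR ih
  | boxT htu => exact .boxT (hst.trans htu)
  | boxF _ ih => exact .boxF ih

theorem OccT.of_subf {t : Term} {A B : Fml} (ht : OccT t A) (hAB : Subf A B) : OccT t B := by
  induction hAB with
  | refl => exact ht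
  | neg _ ih => exact .neg ih
  | impL _ ih => exact .impL ih
  | impR _ ih => exact .impR ih
  | box _ ih => exact .boxF ih

theorem finite_setOf_subf (B : Fml) : {A | Subf A B}.Finite := by
  induction B with
  | prop n => exact (Set.finite_singleton (Fml.prop n)).subset fun | _, .refl _ => rfl
  | bot => exact (Set.finite_singleton Fml.bot).subset fun | _, .refl _ => rfl
  | neg B ih =>
    exact (ih.insert (.neg B)).subset fun
      | _, .refl _ => .inl rfl
      | _, .neg h => .inr h
  | imp B C ihB ihC =>
    exact ((ihB.union ihC).insert (.imp B C)).subset fun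
      | _, .refl _ => .inl rfl
      | _, .impL h => .inr (.inl h)
      | _, .impR h => .inr (.inr h)
  | box t B ih =>
    exact (ih.insert (.box t B)).subset fun
      | _, .refl _ => .inl rfl
      | _, .box h => .inr h

theorem finite_setOf_subTm (t : Term) : {s | SubTm s t}.Finite := by
  induction t with
  | var n => exact (Set.finite_singleton (Term.var n)).subset fun | _, .refl _ => rfl
  | const n => exact (Set.finite_singleton (Term.const n)).subset fun | _, .refl _ => rfl
  | app s t ihs iht =>
    exact ((ihs.union iht).insert (.app s t)).subset fun
      | _, .refl _ => .inl rfl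
      | _, .appL h => .inr (.inl h)
      | _, .appR h => .inr (.inr h)
  | sum s t ihs iht =>
    exact ((ihs.union iht).insert (.sum s t)).subset fun
      | _, .refl _ => .inl rfl
      | _, .sumL h => .inr (.inl h)
      | _, .sumR h => .inr (.inr h)
  | bang t ih =>
    exact (ih.insert (.bang t)).subset fun
      | _, .refl _ => .inl rfl
      | _, .bang h => .inr h
  | quest t ih =>
    exact (ih.insert (.quest t)).subset fun
      | _, .refl _ => .inl rfl
      | _, .quest h => .inr h
  | qbar t ih =>
    exact (ih.insert (.qbar t)).subset fun
      | _, .refl _ => .inl rfl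
      | _, .qbar h => .inr h

theorem finite_setOf_occT (B : Fml) : {t | OccT t B}.Finite := by
  induction B with
  | prop n => exact Set.finite_empty.subset fun _ h => nomatch h
  | bot => exact Set.finite_empty.subset fun _ h => nomatch h
  | neg B ih => exact ih.subset fun | _, .neg h => h
  | imp B C ihB ihC =>
    exact (ihB.union ihC).subset fun
      | _, .impL h => .inl h
      | _, .impR h => .inr h
  | box t B ih =>
    exact ((finite_setOf_subTm t).union ih).subset fun
      | _, .boxT h => .inl h
      | _, .boxF h => .inr h

section OccRoot

variable {R R' : Set Fml} {s t : Term}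

theorem OccRoot.mono (hR : R ⊆ R') : OccRoot R t → OccRoot R' t
  | ⟨B, hB, ht⟩ => ⟨B, hR hB, ht⟩

theorem OccRoot.of_subTm (hst : SubTm s t) : OccRoot R t → OccRoot R s
  | ⟨B, hB, ht⟩ => ⟨B, hB, ht.of_subTm hst⟩

theorem finite_setOf_occRoot (hR : R.Finite) : {t | OccRoot R t}.Finite :=
  (hR.biUnion fun B _ => finite_setOf_occT B).subset fun _ ⟨_, hB, ht⟩ => Set.mem_biUnion hB ht

end OccRoot

section CSSub

variable {L : Logic} {cs : ConstSpec L} {R R' : Set Fml} {t : Term} {A B : Fml}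

theorem cssub_iff_exists_mem_union : CSSub cs R A ↔ ∃ B ∈ R ∪ cs.set, Subf A B := by
  simp only [CSSub, Set.mem_union, or_and_right, exists_or]

theorem CSSub.mono (hR : R ⊆ R') : CSSub cs R A → CSSub cs R' A :=
  Or.imp_left fun ⟨B, hB, hAB⟩ => ⟨B, hR hB, hAB⟩

theorem CSSub.of_subf (hB : CSSub cs R B) (hAB : Subf A B) : CSSub cs R A :=
  hB.imp (fun ⟨C, hC, hBC⟩ => ⟨C, hC, hAB.trans hBC⟩)
    fun ⟨C, hC, hBC⟩ => ⟨C, hC, hAB.trans hBC⟩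

theorem CSSub.of_neg (h : CSSub cs R (.neg A)) : CSSub cs R A :=
  h.of_subf (.neg (.refl A))

theorem CSSub.imp_left (h : CSSub cs R (.imp A B)) : CSSub cs R A :=
  h.of_subf (.impL (.refl A))

theorem CSSub.imp_right (h : CSSub cs R (.imp A B)) : CSSub cs R B :=
  h.of_subf (.impR (.refl B))

theorem CSSub.of_box (h : CSSub cs R (.box t A)) : CSSub cs R A :=
  h.of_subf (.box (.refl A))

theorem CSSub.occRoot_of_box (h : CSSub cs R (.box t A)) : OccRoot (R ∪ cs.set) t :=
  have ⟨C, hC, hsub⟩ := cssub_iff_exists_mem_union.1 h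
  ⟨C, hC, .of_subf (.boxT (.refl t)) hsub⟩

theorem WeakCSSub.of_neg : WeakCSSub cs R (.neg A) → CSSub cs R A
  | .inl h => h.of_neg
  | .inr ⟨_, rfl, h⟩ => h

theorem WeakCSSub.imp : WeakCSSub cs R (.imp A B) → CSSub cs R (.imp A B)
  | .inl h => h

theorem WeakCSSub.box : WeakCSSub cs R (.box t A) → CSSub cs R (.box t A)
  | .inl h => h

theorem finite_setOf_cssub (hcs : cs.set.Finite) (hR : R.Finite) : {A | CSSub cs R A}.Finite :=
  ((hR.union hcs).biUnion fun B _ => finite_setOf_subf B).subset fun _ hA =>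
    have ⟨_, hB, hAB⟩ := cssub_iff_exists_mem_union.1 hA
    Set.mem_biUnion hB hAB

theorem finite_setOf_weakCSSub (hcs : cs.set.Finite) (hR : R.Finite) :
    {A | WeakCSSub cs R A}.Finite :=
  have hsub := finite_setOf_cssub hcs hR
  (hsub.union (hsub.image Fml.neg)).subset fun _ =>
    Or.imp_right fun ⟨C, hA, hC⟩ => ⟨C, hC, hA.symm⟩

end CSSub

/-- The nodes that can occur in a tableau with root set `R`: weak CS-subformulas of `R`, and
evidential formulas on a CS-subformula of `R`. The terms range over those occurring in `R` or in
`cs`: rule (PB) may introduce a CS-subformula `t:A` with `t` foreign to `R`, from which (Te)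
extracts `[t,A]`. -/
def csNodes {L : Logic} (cs : ConstSpec L) (R : Set Fml) : Set Node :=
  {N | match N with
    | .fml A => WeakCSSub cs R A
    | .pos t A => OccRoot (R ∪ cs.set) t ∧ CSSub cs R A
    | .neg t A => OccRoot (R ∪ cs.set) t ∧ CSSub cs R A}

/-- The formula underlying a node, `t:A` for both `[t,A]` and `∼[t,A]`. The sign `∼` is dropped
because only the subformulas and terms of the result matter. -/
def Node.toFml : Node → Fml
  | .fml A => A
  | .pos t A => .box t A
  | .neg t A => .box t A

section Branches

variable {L : Logic} {cs : ConstSpec L} {R R' : Set Fml} {Γ Δ : Set Node}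

theorem finite_csNodes (hcs : cs.set.Finite) (hR : R.Finite) : (csNodes cs R).Finite := by
  have hweak := (finite_setOf_weakCSSub hcs hR).image Node.fml
  have hocc := finite_setOf_occRoot (hR.union hcs)
  have hsub := finite_setOf_cssub hcs hR
  refine ((hweak.union (hocc.image2 Node.pos hsub)).union (hocc.image2 Node.neg hsub)).subset ?_
  rintro (A | ⟨t, A⟩ | ⟨t, A⟩) hN
  · exact .inl (.inl ⟨A, hN, rfl⟩)
  · exact .inl (.inr ⟨t, hN.1, A, hN.2, rfl⟩)
  · exact .inr ⟨t, hN.1, A, hN.2, rfl⟩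

theorem CSSub.fml_mem {A : Fml} (h : CSSub cs R A) : .fml A ∈ csNodes cs R :=
  .inl h

theorem CSSub.fml_neg_mem {A : Fml} (h : CSSub cs R A) : .fml (.neg A) ∈ csNodes cs R :=
  .inr ⟨A, rfl, h⟩

theorem CSSub.pos_mem {t : Term} {A : Fml} (h : CSSub cs R (.box t A)) :
    .pos t A ∈ csNodes cs R :=
  ⟨h.occRoot_of_box, h.of_box⟩

theorem CSSub.neg_mem {t : Term} {A : Fml} (h : CSSub cs R (.box t A)) :
    .neg t A ∈ csNodes cs R :=
  ⟨h.occRoot_of_box, h.of_box⟩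

theorem mem_csNodes_of_toFml_mem {N : Node} (hN : N.toFml ∈ R) : N ∈ csNodes cs R := by
  have hsub : CSSub cs R N.toFml := .inl ⟨_, hN, .refl _⟩
  cases N with
  | fml A => exact hsub.fml_mem
  | pos t A => exact hsub.pos_mem
  | neg t A => exact hsub.neg_mem

theorem RuleApp.subset_csNodes {exts : List (Set Node)} (h : RuleApp L cs R Γ exts)
    (hR : R ⊆ R') (hΓ : Γ ⊆ csNodes cs R') : ∀ Δ ∈ exts, Δ ⊆ csNodes cs R' := by
  have hocc {t : Term} (ht : OccRoot R t) : OccRoot (R' ∪ cs.set) t :=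
    ht.mono (hR.trans Set.subset_union_left)
  cases h <;> simp only [List.mem_cons, List.not_mem_nil, or_false, forall_eq_or_imp,
    forall_eq, Set.insert_subset_iff, hΓ, and_true]
  case fNeg h => exact (hΓ h).of_neg.of_neg.fml_mem
  case fImp h => exact ⟨(hΓ h).of_neg.imp_left.fml_mem, (hΓ h).of_neg.imp_right.fml_neg_mem⟩
  case tImp h => exact ⟨(hΓ h).imp.imp_left.fml_neg_mem, (hΓ h).imp.imp_right.fml_mem⟩
  case te h => exact (hΓ h).box.pos_mem
  case fe h => exact (hΓ h).of_neg.neg_mem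
  case plusL h => exact ⟨(hΓ h).1.of_subTm (.sumL (.refl _)), (hΓ h).2⟩
  case plusR h => exact ⟨(hΓ h).1.of_subTm (.sumR (.refl _)), (hΓ h).2⟩
  case appR hAB hst => exact ⟨hocc hst, (hAB.mono hR).imp_right⟩
  case rulePB hA => exact ⟨(hA.mono hR).fml_mem, (hA.mono hR).fml_neg_mem⟩
  case rulePBe hA ht => exact ⟨⟨hocc ht, hA.mono hR⟩, hocc ht, hA.mono hR⟩
  case ruleT h => exact (hΓ h).2.fml_mem
  case ruleD h => exact (hΓ h).2.fml_mem
  case rule4 h => exact (hΓ h).2.neg_mem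
  case ruleB h => exact (hΓ h).2.of_neg.of_box.fml_mem
  case rule5 h => exact (hΓ h).2.of_neg.pos_mem

theorem Reach.subset_csNodes (h : Reach L cs R Γ Δ) (hR : R ⊆ R') (hΓ : Γ ⊆ csNodes cs R') :
    Δ ⊆ csNodes cs R' := by
  induction h with
  | refl => exact hΓ
  | step _ happ hmem ih => exact happ.subset_csNodes hR ih _ hmem

theorem finite_setOf_reach (hcs : cs.set.Finite) (hR : R.Finite) (hΓ : Γ.Finite) :
    {Δ | Reach L cs R Γ Δ}.Finite := by
  have hnodes : Γ ⊆ csNodes cs (R ∪ Node.toFml '' Γ) := fun N hN =>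
    mem_csNodes_of_toFml_mem (.inr (Set.mem_image_of_mem Node.toFml hN))
  exact (finite_csNodes hcs (hR.union (hΓ.image Node.toFml))).finite_subsets.subset
    fun Δ hΔ => hΔ.subset_csNodes Set.subset_union_left hnodes

theorem reach_of_forall_step {f : ℕ → Set Node} (hstep : ∀ n, Step L cs R (f n) (f (n + 1)))
    (n : ℕ) : Reach L cs R (f 0) (f n) := by
  induction n with
  | zero => exact .refl _
  | succ n ih =>
    obtain ⟨_, happ, hmem, -⟩ := hstep n
    exact ih.step happ hmem

end Branches

theorem tableau_termination_general (L : Logic) (cs : ConstSpec L) (hfin : cs.set.Finite)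
    (R : Set Fml) (hR : R.Finite) (f : ℕ → Set Node) (h0 : (f 0).Finite) :
    ¬ (∀ n, Step L cs R (f n) (f (n + 1))) := by
  intro hstep
  have hmono : StrictMono f := strictMono_nat_of_lt_succ fun n =>
    have ⟨_, _, _, hlt⟩ := hstep n
    hlt
  exact Set.infinite_range_of_injective hmono.injective
    ((finite_setOf_reach hfin hR h0).subset
      (Set.range_subset_iff.2 (reach_of_forall_step hstep)))

end JLTab

/-- Termination: for a finite constant specification CS, every
JL^e_CS-tableau construction terminates: there is no infinite sequence of
non-redundant rule applications starting from the root branch {¬A}. -/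
theorem JLTab.tableau_termination (L : Logic) (cs : ConstSpec L)
    (hfin : cs.set.Finite) (A : Fml) (f : ℕ → Set Node)
    (h0 : f 0 = {Node.fml (Fml.neg A)}) :
    ¬ (∀ n, Step L cs {Fml.neg A} (f n) (f (n + 1))) :=
  JLTab.tableau_termination_general L cs hfin _ (Set.finite_singleton _) f
    (h0 ▸ Set.finite_singleton _)
end
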